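/- arXiv:2209.15130 — 2 statements merged into one kernel-verified Lean document; each statement's English description precedes it below -/
import Mathlib

section
/- Suppose f satisfies the (2r,4r)-restricted strong convexity and smoothness properties with parameter δ ∈ [0,1). Fix Y* ∈ ℝ^{p×r}_*, set X* := Y*Y*ᵀ, κ* := σ_1(Y*)/σ_r(Y*) and N := sup{⟨B, ∇f(X*)⟩ : rank(B) ≤ r, ‖B‖_F ≤ 1}, and let μ, α, β, γ ≥ 0. Let Y ∈ ℝ^{p×r}_* satisfy d(Y,Y*) > μσ_r(Y*)/κ*, ‖2(YYᵀ − X*)Y‖_F ≤ α·μ·σ_r(Y*)³/(4κ*), ‖Y‖ ≤ β‖Y*‖ and ‖YYᵀ‖_F ≤ γ‖X*‖_F. Let Q ∈ O(r) minimize O ↦ ‖Y − Y*O‖_F over O(r) and set θ := Y − Y*Q. Then ∇²f(YYᵀ)[Yθᵀ + θYᵀ, Yθᵀ + θYᵀ] + 2⟨∇f(YYᵀ), θθᵀ⟩ ≤ [ (α − 2(√2 − 1))·σ_r(Y*)² + 2δ(2β²‖Y*‖² + (1+γ)‖X*‖_F) + 2N ]·‖θ‖²_F. In particular, if α < 2(√2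 − 1), δ ≤ (2(√2 − 1) − α)·σ_r(Y*)²/(8(2β²‖Y*‖² + (1+γ)‖X*‖_F)) and N ≤ (2(√2 − 1) − α)·σ_r(Y*)²/8, then this quadratic form is at most ((α − 2(√2 − 1))/2)·σ_r(Y*)²·‖θ‖²_F < 0, so the lifted Riemannian Hessian of h at Y has at least one negative eigenvalue with escaping direction θ. -/
open Matrix

/-- Trace inner product `⟨A,B⟩ = tr(AᵀB)`. -/
noncomputable def trInner {m n : ℕ} (A B : Matrix (Fin m) (Fin n) ℝ) : ℝ :=
  ∑ i, ∑ j, A i j * B i j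

/-- Frobenius norm. -/
noncomputable def frob {m n : ℕ} (A : Matrix (Fin m) (Fin n) ℝ) : ℝ :=
  Real.sqrt (∑ i, ∑ j, (A i j) ^ 2)

open scoped Classical in
/-- The `i`-th largest eigenvalue (1-indexed, `1 ≤ i ≤ n`) of a Hermitian matrix; junk value 0
otherwise. -/
noncomputable def eigVal {n : ℕ} (A : Matrix (Fin n) (Fin n) ℝ) (i : ℕ) : ℝ :=
  if hA : A.IsHermitian then
    if h : n - i < n then hA.eigenvalues (Tuple.sort hA.eigenvalues ⟨n - i, h⟩) else 0
  else 0

/-- The `i`-th largest singular value (1-indexed) of `Y`, so `sval Y 1 = ‖Y‖` (spectral norm)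
and `sval Y r` is the least singular value. -/
noncomputable def sval {p r : ℕ} (Y : Matrix (Fin p) (Fin r) ℝ) (i : ℕ) : ℝ :=
  Real.sqrt (eigVal (Yᵀ * Y) i)

/-- `Q` is an orthogonal matrix. -/
def IsOrtho {r : ℕ} (Q : Matrix (Fin r) (Fin r) ℝ) : Prop := Qᵀ * Q = 1

/-- The quotient distance `d(Y₁,Y₂) = min_{Q ∈ O(r)} ‖Y₂Q − Y₁‖_F`. -/
noncomputable def dOrth {p r : ℕ} (Y₁ Y₂ : Matrix (Fin p) (Fin r) ℝ) : ℝ :=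
  sInf {c | ∃ Q : Matrix (Fin r) (Fin r) ℝ, IsOrtho Q ∧ c = frob (Y₂ * Q - Y₁)}



section H14
variable {m n k : ℕ}

lemma ti_add_left (A B C : Matrix (Fin m) (Fin n) ℝ) : trInner (A + B) C = trInner A C + trInner B C := by
  simp [trInner, add_mul, Finset.sum_add_distrib]
lemma ti_comm (A B : Matrix (Fin m) (Fin n) ℝ) : trInner A B = trInner B A := by
  simp [trInner, mul_comm]
lemma ti_add_right (A B C : Matrix (Fin m) (Fin n) ℝ) : trInner A (B + C) = trInner A B + trInner A C := by
  simp [trInner, mul_add, Finset.sum_add_distrib]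
lemma ti_sub_left (A B C : Matrix (Fin m) (Fin n) ℝ) : trInner (A - B) C = trInner A C - trInner B C := by
  simp [trInner, sub_mul, Finset.sum_sub_distrib]
lemma ti_sub_right (A B C : Matrix (Fin m) (Fin n) ℝ) : trInner A (B - C) = trInner A B - trInner A C := by
  simp [trInner, mul_sub, Finset.sum_sub_distrib]
lemma ti_smul_left (c : ℝ) (A B : Matrix (Fin m) (Fin n) ℝ) : trInner (c • A) B = c * trInner A B := by
  simp [trInner, Finset.mul_sum, mul_assoc]
lemma ti_smul_right (c : ℝ) (A B : Matrix (Fin m) (Fin n) ℝ) : trInner A (c • B) = c * trInner A B := by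
  simp [trInner, Finset.mul_sum, mul_left_comm]
lemma ti_tr (A B : Matrix (Fin m) (Fin n) ℝ) : trInner A B = trace (Aᵀ * B) := by
  simp only [trInner, trace, diag, mul_apply, transpose_apply]
  exact Finset.sum_comm
lemma ti_transpose (A B : Matrix (Fin m) (Fin n) ℝ) : trInner Aᵀ Bᵀ = trInner A B := by
  simp only [trInner, transpose_apply]
  exact Finset.sum_comm
lemma ti_mul_left (A : Matrix (Fin m) (Fin n) ℝ) (B : Matrix (Fin n) (Fin k) ℝ) (C : Matrix (Fin m) (Fin k) ℝ) :
    trInner (A * B) C = trInner B (Aᵀ * C) := by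
  simp [ti_tr, Matrix.mul_assoc]
lemma ti_mul_left' (A : Matrix (Fin m) (Fin n) ℝ) (B : Matrix (Fin n) (Fin k) ℝ) (C : Matrix (Fin m) (Fin k) ℝ) :
    trInner (A * B) C = trInner A (C * Bᵀ) := by
  rw [← ti_transpose, transpose_mul, ti_mul_left, transpose_transpose, ← ti_transpose]
  simp
lemma ti_self_nonneg (A : Matrix (Fin m) (Fin n) ℝ) : 0 ≤ trInner A A :=
  Finset.sum_nonneg fun _ _ => Finset.sum_nonneg fun _ _ => mul_self_nonneg _
lemma frob_sq (A : Matrix (Fin m) (Fin n) ℝ) : frob A ^ 2 = trInner A A := by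
  rw [frob, Real.sq_sqrt (by positivity)]
  simp [trInner, sq]
lemma frob_nn (A : Matrix (Fin m) (Fin n) ℝ) : 0 ≤ frob A := Real.sqrt_nonneg _
lemma frob_eq (A : Matrix (Fin m) (Fin n) ℝ) : frob A = Real.sqrt (trInner A A) := by
  rw [← frob_sq, Real.sqrt_sq (frob_nn A)]

lemma ti_le (A B : Matrix (Fin m) (Fin n) ℝ) : trInner A B ≤ frob A * frob B := by
  have h := Finset.sum_mul_sq_le_sq_mul_sq (Finset.univ : Finset (Fin m × Fin n))
    (fun x => A x.1 x.2) (fun x => B x.1 x.2)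
  simp only [← Finset.univ_product_univ, Finset.sum_product] at h
  refine le_of_sq_le_sq ?_ (mul_nonneg (frob_nn A) (frob_nn B))
  rw [mul_pow, frob_sq, frob_sq]
  simpa [trInner, sq] using h
where le_of_sq_le_sq {a b : ℝ} (h : a ^ 2 ≤ b ^ 2) (hb : 0 ≤ b) : a ≤ b := abs_le_of_sq_le_sq' h hb |>.2

lemma frob_smul (c : ℝ) (A : Matrix (Fin m) (Fin n) ℝ) : frob (c • A) = |c| * frob A := by
  rw [frob_eq, frob_eq, ti_smul_left, ti_smul_right, ← mul_assoc, Real.sqrt_mul (mul_self_nonneg c),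
    Real.sqrt_mul_self_eq_abs]

lemma frob_add (A B : Matrix (Fin m) (Fin n) ℝ) : frob (A + B) ≤ frob A + frob B := by
  refine abs_le_of_sq_le_sq' ?_ (add_nonneg (frob_nn A) (frob_nn B)) |>.2
  rw [frob_sq, ti_add_left, ti_add_right, ti_add_right, ti_comm B A, ← frob_sq, ← frob_sq]
  nlinarith [ti_le A B]

lemma frob_sub (A B : Matrix (Fin m) (Fin n) ℝ) : frob (A - B) ≤ frob A + frob B := by
  have := frob_add A ((-1 : ℝ) • B)
  rw [frob_smul] at this
  simpa [sub_eq_add_neg] using this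

lemma frob_transpose (A : Matrix (Fin m) (Fin n) ℝ) : frob Aᵀ = frob A := by
  rw [frob_eq, frob_eq, ti_transpose]

lemma frob_mul (A : Matrix (Fin m) (Fin n) ℝ) (B : Matrix (Fin n) (Fin k) ℝ) :
    frob (A * B) ≤ frob A * frob B := by
  refine abs_le_of_sq_le_sq' ?_ (mul_nonneg (frob_nn A) (frob_nn B)) |>.2
  have e : frob (A * B) ^ 2 ≤ ∑ i, ∑ j, (∑ l, A i l ^ 2) * (∑ l, B l j ^ 2) := by
    rw [frob_sq]
    refine Finset.sum_le_sum fun i _ => Finset.sum_le_sum fun j _ => ?_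
    rw [← sq, mul_apply]
    exact Finset.sum_mul_sq_le_sq_mul_sq _ _ _
  refine e.trans (le_of_eq ?_)
  rw [mul_pow, frob_sq, ← frob_transpose B, frob_sq, ← Finset.sum_mul_sum]
  simp [trInner, sq]

/-- Quadratic bounds along a line. -/
lemma line_bound (g g' g'' : ℝ → ℝ) (h1 : ∀ t, HasDerivAt g (g' t) t) (h2 : ∀ t, HasDerivAt g' (g'' t) t)
    (c : ℝ) (h : ∀ t, g'' t ≤ c) : g 1 ≤ g 0 + g' 0 + c / 2 := by
  have a1 : Antitone (fun t => g' t - c * t) := by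
    apply antitone_of_hasDerivAt_nonpos (f' := fun t => g'' t - c)
    · intro t
      have := (h2 t).sub ((hasDerivAt_id t).const_mul c)
      rw [mul_one] at this
      exact this
    · intro t; simpa using h t
  have a2 : AntitoneOn (fun t => g t - g' 0 * t - c / 2 * t ^ 2) (Set.Ici 0) := by
    have hd : ∀ t, HasDerivAt (fun t => g t - g' 0 * t - c / 2 * t ^ 2) (g' t - g' 0 - c * t) t := by
      intro t
      have := ((h1 t).sub ((hasDerivAt_id t).const_mul (g' 0))).sub (((hasDerivAt_id t).pow 2).const_mul (c/2))
      refine HasDerivAt.congr_deriv (f := fun t => g t - g' 0 * t - c / 2 * t ^ 2) this ?_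
      simp only [id]; push_cast; ring
    apply antitoneOn_of_deriv_nonpos (convex_Ici 0)
    · exact fun t _ => (hd t).continuousAt.continuousWithinAt
    · exact fun t _ => (hd t).differentiableAt.differentiableWithinAt
    · intro t ht
      rw [(hd t).deriv]
      have ht' : 0 ≤ t := by simp at ht; exact ht.le
      have := a1 ht'
      norm_num at this; linarith
  have := a2 (Set.mem_Ici.2 le_rfl) (Set.mem_Ici.2 zero_le_one) zero_le_one
  norm_num at this; linarith

lemma line_bound' (g g' g'' : ℝ → ℝ) (h1 : ∀ t, HasDerivAt g (g' t) t) (h2 : ∀ t, HasDerivAt g' (g'' t) t)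
    (c : ℝ) (h : ∀ t, c ≤ g'' t) : g 0 + g' 0 + c / 2 ≤ g 1 := by
  have := line_bound (fun t => - g t) (fun t => - g' t) (fun t => - g'' t) (fun t => (h1 t).neg) (fun t => (h2 t).neg)
    (-c) (fun t => neg_le_neg (h t))
  norm_num at this; linarith

/-- Spectral bounds. -/
lemma eig_bounds {A : Matrix (Fin n) (Fin n) ℝ} (hA : A.IsHermitian) (v : Fin n → ℝ) :
    eigVal A n * (v ⬝ᵥ v) ≤ v ⬝ᵥ (A *ᵥ v) ∧ v ⬝ᵥ (A *ᵥ v) ≤ eigVal A 1 * (v ⬝ᵥ v) := by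
  rcases Nat.eq_zero_or_pos n with h0 | h0
  · subst h0; simp
  have hmin : ∀ i, eigVal A n ≤ hA.eigenvalues i := by
    intro i
    have := Tuple.monotone_sort hA.eigenvalues (show (⟨n - n, by omega⟩ : Fin n) ≤ (Tuple.sort hA.eigenvalues).symm i by
      rw [Fin.le_def]; simp)
    simp only [Function.comp, Equiv.apply_symm_apply] at this
    rw [eigVal, dif_pos hA, dif_pos (by omega)]
    exact this
  have hmax : ∀ i, hA.eigenvalues i ≤ eigVal A 1 := by
    intro i
    have := Tuple.monotone_sort hA.eigenvalues (show (Tuple.sort hA.eigenvalues).symm i ≤ (⟨n - 1, by omega⟩ : Fin n) by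
      rw [Fin.le_def]; simp; omega)
    simp only [Function.comp, Equiv.apply_symm_apply] at this
    rw [eigVal, dif_pos hA, dif_pos (by omega)]
    exact this
  have hsp := hA.spectral_theorem
  set U : Matrix (Fin n) (Fin n) ℝ := (hA.eigenvectorUnitary : Matrix (Fin n) (Fin n) ℝ) with hU
  have hUU : U * Uᵀ = 1 := by
    have := (Matrix.mem_unitaryGroup_iff).1 hA.eigenvectorUnitary.2
    simpa [star_eq_conjTranspose, conjTranspose_eq_transpose_of_trivial] using this
  have hA' : A = U * diagonal hA.eigenvalues * Uᵀ := by
    rw [Unitary.conjStarAlgAut_apply] at hsp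
    simpa [star_eq_conjTranspose, conjTranspose_eq_transpose_of_trivial, Function.comp_def] using hsp
  set w := Uᵀ *ᵥ v with hw
  have e1 : v ⬝ᵥ (A *ᵥ v) = ∑ i, hA.eigenvalues i * (w i * w i) := by
    conv_lhs => rw [hA']
    rw [← mulVec_mulVec, ← mulVec_mulVec, dotProduct_mulVec, ← mulVec_transpose, ← hw]
    simp [dotProduct, mulVec_diagonal]
    exact Finset.sum_congr rfl fun _ _ => by ring
  have e2 : v ⬝ᵥ v = ∑ i, w i * w i := by
    have : w ⬝ᵥ w = v ⬝ᵥ v := by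
      rw [hw, dotProduct_mulVec, ← mulVec_transpose, transpose_transpose, mulVec_mulVec, hUU, one_mulVec]
    rw [← this]; rfl
  rw [e1, e2, Finset.mul_sum, Finset.mul_sum]
  exact ⟨Finset.sum_le_sum fun i _ => mul_le_mul_of_nonneg_right (hmin i) (mul_self_nonneg _),
    Finset.sum_le_sum fun i _ => mul_le_mul_of_nonneg_right (hmax i) (mul_self_nonneg _)⟩

lemma herm_tmul (Y : Matrix (Fin m) (Fin n) ℝ) : (Yᵀ * Y).IsHermitian := by
  have := isHermitian_conjTranspose_mul_self Y
  rwa [conjTranspose_eq_transpose_of_trivial] at this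

lemma psd_tmul (Y : Matrix (Fin m) (Fin n) ℝ) : (Yᵀ * Y).PosSemidef := by
  have := posSemidef_conjTranspose_mul_self Y
  rwa [conjTranspose_eq_transpose_of_trivial] at this

lemma eig_nn (Y : Matrix (Fin m) (Fin n) ℝ) (i : ℕ) : 0 ≤ eigVal (Yᵀ * Y) i := by
  unfold eigVal
  split_ifs with h1 h2
  · exact (psd_tmul Y).eigenvalues_nonneg _
  · exact le_rfl
  · exact le_rfl

lemma sval_sq (Y : Matrix (Fin m) (Fin n) ℝ) (i : ℕ) : sval Y i ^ 2 = eigVal (Yᵀ * Y) i :=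
  Real.sq_sqrt (eig_nn Y i)

lemma sval_nn (Y : Matrix (Fin m) (Fin n) ℝ) (i : ℕ) : 0 ≤ sval Y i := Real.sqrt_nonneg _

lemma sval_pos (Y : Matrix (Fin m) (Fin n) ℝ) (h0 : 0 < n) (h : Y.rank = n) : 0 < sval Y n := by
  apply Real.sqrt_pos.2
  have hinj : Function.Injective Y.mulVec := by
    rw [Matrix.mulVec_injective_iff, linearIndependent_iff_card_eq_finrank_span, Set.finrank, ← Matrix.rank_eq_finrank_span_cols, h]
    simp
  have hp : (Yᵀ * Y).PosDef := by
    have := PosDef.conjTranspose_mul_self Y hinj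
    rwa [conjTranspose_eq_transpose_of_trivial] at this
  unfold eigVal
  rw [dif_pos (herm_tmul Y), dif_pos (by omega)]
  exact hp.eigenvalues_pos _

lemma frob_mul_bounds (Y : Matrix (Fin m) (Fin n) ℝ) (B : Matrix (Fin n) (Fin k) ℝ) :
    sval Y n ^ 2 * frob B ^ 2 ≤ frob (Y * B) ^ 2 ∧ frob (Y * B) ^ 2 ≤ sval Y 1 ^ 2 * frob B ^ 2 := by
  have e1 : frob (Y * B) ^ 2 = ∑ j, (B.col j) ⬝ᵥ ((Yᵀ * Y) *ᵥ (B.col j)) := by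
    rw [frob_sq, ti_mul_left, ← Matrix.mul_assoc, ti_tr]
    simp only [trace, diag, mul_apply, dotProduct, mulVec, transpose_apply, col]
  have e2 : frob B ^ 2 = ∑ j, (B.col j) ⬝ᵥ (B.col j) := by
    rw [frob_sq, ti_tr]
    simp only [trace, diag, mul_apply, dotProduct, transpose_apply, col]
  rw [e1, e2, sval_sq, sval_sq, Finset.mul_sum, Finset.mul_sum]
  exact ⟨Finset.sum_le_sum fun j _ => (eig_bounds (herm_tmul Y) _).1,
    Finset.sum_le_sum fun j _ => (eig_bounds (herm_tmul Y) _).2⟩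

end H14
section H14b
variable {m n k l : ℕ}

lemma ti_four (A : Matrix (Fin m) (Fin k) ℝ) (B : Matrix (Fin n) (Fin k) ℝ) (C : Matrix (Fin m) (Fin l) ℝ)
    (D : Matrix (Fin n) (Fin l) ℝ) : trInner (A * Bᵀ) (C * Dᵀ) = trInner (Cᵀ * A) (Dᵀ * B) := by
  rw [ti_comm, ti_mul_left, ← Matrix.mul_assoc, ti_comm, ti_mul_left', transpose_transpose]

lemma ti_single (i j : Fin n) (V : Matrix (Fin n) (Fin n) ℝ) : trInner (Matrix.single i j (1 : ℝ)) V = V i j := by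
  simp [trInner, Matrix.single_apply, ite_and]

lemma ortho_opt (V : Matrix (Fin n) (Fin n) ℝ) (h : ∀ O, IsOrtho O → trInner O V ≤ trInner 1 V) :
    Vᵀ = V ∧ ∀ v : Fin n → ℝ, 0 ≤ v ⬝ᵥ (V *ᵥ v) := by
  have hpsd : ∀ v : Fin n → ℝ, 0 ≤ v ⬝ᵥ (V *ᵥ v) := by
    intro v
    by_cases hv : v = 0
    · subst hv; simp
    have hvv : v ⬝ᵥ v ≠ 0 := fun h => hv (dotProduct_self_eq_zero.1 h)
    have hvp : 0 < v ⬝ᵥ v := lt_of_le_of_ne (Finset.sum_nonneg fun _ _ => mul_self_nonneg _) (Ne.symm hvv)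
    have ho : IsOrtho (1 - (2 / (v ⬝ᵥ v)) • vecMulVec v v) := by
      unfold IsOrtho
      have e : vecMulVec v v * vecMulVec v v = (v ⬝ᵥ v) • vecMulVec v v := by
        rw [vecMulVec_mul_vecMulVec]
        ext i j; simp [vecMulVec_apply]; try ring
      rw [transpose_sub, transpose_smul, transpose_one, transpose_vecMulVec, sub_mul, mul_sub, mul_sub, mul_one, one_mul,
        mul_one, smul_mul_smul_comm, e, smul_smul]
      have : 2 / (v ⬝ᵥ v) * (2 / (v ⬝ᵥ v)) * (v ⬝ᵥ v) = 2 * (2 / (v ⬝ᵥ v)) := by field_simp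
      rw [this]
      module
    have h1 := h _ ho
    have e2 : trInner (vecMulVec v v) V = v ⬝ᵥ (V *ᵥ v) := by
      simp only [trInner, vecMulVec_apply, dotProduct, mulVec, Finset.mul_sum]
      exact Finset.sum_congr rfl fun _ _ => Finset.sum_congr rfl fun _ _ => by ring
    rw [ti_sub_left, ti_smul_left, e2] at h1
    have : 0 < 2 / (v ⬝ᵥ v) := by positivity
    exact nonneg_of_mul_nonneg_right (by linarith) this
  refine ⟨?_, hpsd⟩
  ext i j
  rw [transpose_apply]
  by_cases hij : i = j
  · rw [hij]
  have hdiag : ∀ i, 0 ≤ V i i := by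
    intro i
    have := hpsd (Pi.single i 1)
    simpa using this
  have key : ∀ c s : ℝ, c ^ 2 + s ^ 2 = 1 → s * (V i j - V j i) + (c - 1) * (V i i + V j j) ≤ 0 := by
    intro c s hcs
    have ho : IsOrtho (1 + s • (Matrix.single i j (1:ℝ) - Matrix.single j i 1) +
        (c - 1) • (Matrix.single i i (1:ℝ) + Matrix.single j j 1)) := by
      unfold IsOrtho
      simp only [transpose_add, transpose_sub, transpose_smul, transpose_one, transpose_single,
        add_mul, mul_add, sub_mul, mul_sub, smul_mul_assoc, mul_smul_comm, one_mul, mul_one,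
        single_mul_single_same, single_mul_single_of_ne _ _ _ _ hij, single_mul_single_of_ne _ _ _ _ (Ne.symm hij)]
      have hs : s ^ 2 = 1 - c ^ 2 := by linarith
      match_scalars <;> first | linear_combination hcs | linear_combination -hcs | ring
    have h1 := h _ ho
    rw [ti_add_left, ti_add_left, ti_smul_left, ti_smul_left, ti_add_left, ti_sub_left, ti_single, ti_single,
      ti_single, ti_single] at h1
    linarith
  set A := V i i + V j j with hA
  set B := V i j - V j i with hB
  have hA0 : 0 ≤ A := add_nonneg (hdiag i) (hdiag j)
  have key2 : ∀ t : ℝ, t * B ≤ t ^ 2 * A := by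
    intro t
    have hp : 0 < 1 + t ^ 2 := by positivity
    have := key ((1 - t ^ 2) / (1 + t ^ 2)) (2 * t / (1 + t ^ 2)) (by field_simp; ring)
    have e : 2 * t / (1 + t ^ 2) * B + ((1 - t ^ 2) / (1 + t ^ 2) - 1) * A = 2 * (t * B - t ^ 2 * A) / (1 + t ^ 2) := by
      field_simp; ring
    rw [e, div_le_iff₀ hp] at this
    linarith
  have h3 := key2 (B / (A + 1))
  have hA1 : 0 < A + 1 := by linarith
  have h4 : B ^ 2 * (A + 1) ≤ B ^ 2 * A := by
    have e1 : B / (A + 1) * B = B ^ 2 * (A + 1) / (A + 1) ^ 2 := by field_simp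
    have e2 : (B / (A + 1)) ^ 2 * A = B ^ 2 * A / (A + 1) ^ 2 := by field_simp
    rw [e1, e2] at h3
    exact (div_le_div_iff_of_pos_right (by positivity)).1 h3
  have h5 : B = 0 := by
    have : B ^ 2 ≤ 0 := by linarith
    exact pow_eq_zero_iff (two_ne_zero) |>.1 (le_antisymm this (sq_nonneg B))
  linarith

lemma psd_ti (P : Matrix (Fin n) (Fin n) ℝ) (h : ∀ v : Fin n → ℝ, 0 ≤ v ⬝ᵥ (P *ᵥ v))
    (T : Matrix (Fin m) (Fin n) ℝ) : 0 ≤ trInner P (Tᵀ * T) := by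
  rw [← ti_mul_left, ti_comm]
  refine Finset.sum_nonneg fun i _ => ?_
  have := h (T i)
  rw [dotProduct_mulVec, dotProduct_comm] at this
  simpa [dotProduct, vecMul, mul_apply] using this

/-- The geometric facts about aligned factors. -/
lemma geom (Z T : Matrix (Fin m) (Fin n) ℝ) (hsym : (Zᵀ * (Z + T))ᵀ = Zᵀ * (Z + T))
    (hpsd : ∀ v : Fin n → ℝ, 0 ≤ v ⬝ᵥ ((Zᵀ * (Z + T)) *ᵥ v)) :
    frob (T * Tᵀ) ^ 2 ≤ 2 * frob (Z * Tᵀ + T * Zᵀ + T * Tᵀ) ^ 2 ∧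
    2 * (Real.sqrt 2 - 1) * frob (Z * Tᵀ) ^ 2 ≤ frob (Z * Tᵀ + T * Zᵀ + T * Tᵀ) ^ 2 := by
  have hH : Zᵀ * T = Tᵀ * Z := by
    rw [transpose_mul, transpose_transpose, transpose_add, Matrix.add_mul, Matrix.mul_add] at hsym
    exact (add_left_cancel hsym).symm
  have h0 := psd_ti _ hpsd T
  rw [Matrix.mul_add, ti_add_left] at h0
  have hM : frob (Z * Tᵀ + T * Zᵀ + T * Tᵀ) ^ 2 = trInner (Tᵀ * T) (Tᵀ * T) + 4 * trInner (Zᵀ * T) (Tᵀ * T)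
      + 2 * trInner (Zᵀ * T) (Zᵀ * T) + 2 * trInner (Zᵀ * Z) (Tᵀ * T) := by
    rw [frob_sq]
    simp only [ti_add_left, ti_add_right, ti_four, ← hH]
    rw [ti_comm (Tᵀ * T) (Zᵀ * Z), ti_comm (Tᵀ * T) (Zᵀ * T)]
    ring
  have hS : frob (T * Tᵀ) ^ 2 = trInner (Tᵀ * T) (Tᵀ * T) := by rw [frob_sq, ti_four]
  have hZ : frob (Z * Tᵀ) ^ 2 = trInner (Zᵀ * Z) (Tᵀ * T) := by rw [frob_sq, ti_four]
  have hc : ∀ c : ℝ, 0 ≤ trInner (Tᵀ * T) (Tᵀ * T) + 2 * c * trInner (Zᵀ * T) (Tᵀ * T)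
      + c ^ 2 * trInner (Zᵀ * T) (Zᵀ * T) := by
    intro c
    have := ti_self_nonneg (Tᵀ * T + c • (Zᵀ * T))
    simp only [ti_add_left, ti_add_right, ti_smul_left, ti_smul_right] at this
    rw [ti_comm (Tᵀ * T) (Zᵀ * T)] at this
    linarith
  rw [hM, hS, hZ]
  constructor
  · have := hc 2
    linarith
  · have h1 := hc (Real.sqrt 2)
    rw [Real.sq_sqrt (by norm_num)] at h1
    have h2 : Real.sqrt 2 ≤ 2 := by
      rw [Real.sqrt_le_left (by norm_num)]; norm_num
    nlinarith [mul_nonneg (sub_nonneg.2 h2) h0]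

lemma taylor (f : Matrix (Fin m) (Fin m) ℝ → ℝ)
    (gradf : Matrix (Fin m) (Fin m) ℝ → Matrix (Fin m) (Fin m) ℝ)
    (hessf : Matrix (Fin m) (Fin m) ℝ → Matrix (Fin m) (Fin m) ℝ → ℝ)
    (hgradf : ∀ X D : Matrix (Fin m) (Fin m) ℝ,
      HasDerivAt (fun t : ℝ => f (X + t • D)) (trInner (gradf X) D) 0)
    (hhessf : ∀ X G : Matrix (Fin m) (Fin m) ℝ,
      HasDerivAt (fun t : ℝ => trInner (gradf (X + t • G)) G) (hessf X G) 0)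
    (a b : ℝ) (X G Y : Matrix (Fin m) (Fin m) ℝ) (hY : Y = X + G)
    (h : ∀ t : ℝ, a ≤ hessf (X + t • G) G ∧ hessf (X + t • G) G ≤ b) :
    f X + trInner (gradf X) G + a / 2 ≤ f Y ∧ f Y ≤ f X + trInner (gradf X) G + b / 2 := by
  have h1 : ∀ t, HasDerivAt (fun t : ℝ => f (X + t • G)) (trInner (gradf (X + t • G)) G) t := by
    intro t
    have := hgradf (X + t • G) G
    rw [← sub_self t] at this
    have := this.comp_sub_const t t
    refine this.congr_of_eventuallyEq (Filter.Eventually.of_forall fun s => ?_)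
    show f _ = f _
    congr 1; module
  have h2 : ∀ t, HasDerivAt (fun t : ℝ => trInner (gradf (X + t • G)) G) (hessf (X + t • G) G) t := by
    intro t
    have := hhessf (X + t • G) G
    rw [← sub_self t] at this
    have := this.comp_sub_const t t
    refine this.congr_of_eventuallyEq (Filter.Eventually.of_forall fun s => ?_)
    show trInner (gradf _) _ = trInner (gradf _) _
    congr 2; module
  have l1 := line_bound _ _ _ h1 h2 b (fun t => (h t).2)
  have l2 := line_bound' _ _ _ h1 h2 a (fun t => (h t).1)
  simp only [one_smul, zero_smul, add_zero, ← hY] at l1 l2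
  exact ⟨l2, l1⟩

lemma grad_diff (f : Matrix (Fin m) (Fin m) ℝ → ℝ)
    (gradf : Matrix (Fin m) (Fin m) ℝ → Matrix (Fin m) (Fin m) ℝ)
    (hessf : Matrix (Fin m) (Fin m) ℝ → Matrix (Fin m) (Fin m) ℝ → ℝ)
    (hgradf : ∀ X D : Matrix (Fin m) (Fin m) ℝ,
      HasDerivAt (fun t : ℝ => f (X + t • D)) (trInner (gradf X) D) 0)
    (hhessf : ∀ X G : Matrix (Fin m) (Fin m) ℝ,
      HasDerivAt (fun t : ℝ => trInner (gradf (X + t • G)) G) (hessf X G) 0)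
    (δ : ℝ) (hδ0 : 0 ≤ δ) (X M S : Matrix (Fin m) (Fin m) ℝ)
    (h : ∀ a b a' b' : ℝ, (1 - δ) * (frob (a' • M + b' • S)) ^ 2 ≤ hessf (X + a • M + b • S) (a' • M + b' • S) ∧
      hessf (X + a • M + b • S) (a' • M + b' • S) ≤ (1 + δ) * (frob (a' • M + b' • S)) ^ 2) :
    trInner (gradf (X + M)) S - trInner (gradf X) S ≤ trInner M S + δ * (frob M * frob S) := by
  have T : ∀ x a b : ℝ, f (X + x • M) + trInner (gradf (X + x • M)) (a • M + b • S)
        + ((1 - δ) * (frob (a • M + b • S)) ^ 2) / 2 ≤ f (X + (x + a) • M + b • S) ∧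
      f (X + (x + a) • M + b • S) ≤ f (X + x • M) + trInner (gradf (X + x • M)) (a • M + b • S)
        + ((1 + δ) * (frob (a • M + b • S)) ^ 2) / 2 := by
    intro x a b
    refine taylor f gradf hessf hgradf hhessf _ _ (X + x • M) (a • M + b • S) _ (by module) fun t => ?_
    have e : X + x • M + t • (a • M + b • S) = X + (x + t * a) • M + (t * b) • S := by module
    rw [e]
    exact h _ _ _ _
  have E : ∀ a b : ℝ, frob (a • M + b • S) ^ 2 = a ^ 2 * frob M ^ 2 + 2 * (a * b) * trInner M S + b ^ 2 * frob S ^ 2 := by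
    intro a b
    rw [frob_sq, frob_sq, frob_sq]
    simp only [ti_add_left, ti_add_right, ti_smul_left, ti_smul_right]
    rw [ti_comm S M]; ring
  simp only [E, ti_add_right, ti_smul_right] at T
  set K := trInner (gradf (X + M)) S - trInner (gradf X) S - trInner M S with hK
  have hq : ∀ c : ℝ, 0 ≤ (δ * frob S ^ 2) * (c * c) + (-K) * c + δ * frob M ^ 2 / 4 := by
    intro c
    have a1 := (T 0 (1/2) c).2
    have a2 := (T 1 (-1/2) c).1
    have a3 := (T 0 (1/2) (-c)).1
    have a4 := (T 1 (-1/2) (-c)).2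
    have e : (1 : ℝ) + -1/2 = 0 + 1/2 := by norm_num
    rw [e] at a2 a4
    simp only [zero_smul, one_smul, add_zero] at a1 a2 a3 a4
    have : K * c = trInner (gradf (X + M)) S * c - trInner (gradf X) S * c - trInner M S * c := by rw [hK]; ring
    linarith
  have hd := discrim_le_zero hq
  rw [discrim] at hd
  have : K ^ 2 ≤ (δ * (frob M * frob S)) ^ 2 := by nlinarith
  have := (abs_le_of_sq_le_sq' this (mul_nonneg hδ0 (mul_nonneg (frob_nn M) (frob_nn S)))).2
  linarith

lemma rank_two {m k : ℕ} (Y Z : Matrix (Fin m) (Fin k) ℝ) (A B : Matrix (Fin k) (Fin m) ℝ) :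
    (Y * A + Z * B).rank ≤ 2 * k := by
  rw [← Matrix.fromCols_mul_fromRows]
  refine (Matrix.rank_mul_le_left _ _).trans ((Matrix.rank_le_card_width _).trans ?_)
  simp [two_mul]

end H14b
/-- region with negative curvature for `h`: upper bound on the lifted
Riemannian Hessian quadratic form of `h([Y]) = f(YYᵀ)` along the escaping direction
`θ = Y - Ystar Q`, and strict negativity under the stated conditions on `α`, `δ` and `N`. -/
theorem stmt14 {p r : ℕ}
    (f : Matrix (Fin p) (Fin p) ℝ → ℝ)
    (gradf : Matrix (Fin p) (Fin p) ℝ → Matrix (Fin p) (Fin p) ℝ)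
    (hessf : Matrix (Fin p) (Fin p) ℝ → Matrix (Fin p) (Fin p) ℝ → ℝ)
    (hgradf : ∀ X D : Matrix (Fin p) (Fin p) ℝ,
      HasDerivAt (fun t : ℝ => f (X + t • D)) (trInner (gradf X) D) 0)
    (hhessf : ∀ X G : Matrix (Fin p) (Fin p) ℝ,
      HasDerivAt (fun t : ℝ => trInner (gradf (X + t • G)) G) (hessf X G) 0)
    (δ : ℝ) (hδ0 : 0 ≤ δ) (hδ1 : δ < 1)
    (hRSCS : ∀ X G : Matrix (Fin p) (Fin p) ℝ, X.rank ≤ 2 * r → G.rank ≤ 4 * r →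
      (1 - δ) * (frob G) ^ 2 ≤ hessf X G ∧ hessf X G ≤ (1 + δ) * (frob G) ^ 2)
    (Ystar : Matrix (Fin p) (Fin r) ℝ) (hYs : Ystar.rank = r)
    (X : Matrix (Fin p) (Fin p) ℝ) (hX : X = Ystar * Ystarᵀ)
    (N : ℝ) (hN : N = sSup {c : ℝ | ∃ B : Matrix (Fin p) (Fin p) ℝ,
      B.rank ≤ r ∧ frob B ≤ 1 ∧ c = trInner B (gradf X)})
    (κ : ℝ) (hκ : κ = sval Ystar 1 / sval Ystar r)
    (μ α β γ : ℝ) (hμ0 : 0 ≤ μ) (hα0 : 0 ≤ α) (hβ0 : 0 ≤ β) (hγ0 : 0 ≤ γ)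
    (Y : Matrix (Fin p) (Fin r) ℝ) (hY : Y.rank = r)
    (hd : dOrth Y Ystar > μ * sval Ystar r / κ)
    (hgradH : frob ((2 : ℝ) • ((Y * Yᵀ - X) * Y)) ≤ α * μ * (sval Ystar r) ^ 3 / (4 * κ))
    (hspec : sval Y 1 ≤ β * sval Ystar 1)
    (hfrobYY : frob (Y * Yᵀ) ≤ γ * frob X)
    (Q : Matrix (Fin r) (Fin r) ℝ) (hQ : IsOrtho Q)
    (hQmin : ∀ O : Matrix (Fin r) (Fin r) ℝ, IsOrtho O →
      frob (Y - Ystar * Q) ≤ frob (Y - Ystar * O))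
    (θ : Matrix (Fin p) (Fin r) ℝ) (hθ : θ = Y - Ystar * Q) :
    hessf (Y * Yᵀ) (Y * θᵀ + θ * Yᵀ) + 2 * trInner (gradf (Y * Yᵀ)) (θ * θᵀ) ≤
      ((α - 2 * (Real.sqrt 2 - 1)) * (sval Ystar r) ^ 2 +
        2 * δ * (2 * β ^ 2 * (sval Ystar 1) ^ 2 + (1 + γ) * frob X) + 2 * N) *
        (frob θ) ^ 2 ∧
    (α < 2 * (Real.sqrt 2 - 1) →
      δ ≤ (2 * (Real.sqrt 2 - 1) - α) * (sval Ystar r) ^ 2 /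
        (8 * (2 * β ^ 2 * (sval Ystar 1) ^ 2 + (1 + γ) * frob X)) →
      N ≤ (2 * (Real.sqrt 2 - 1) - α) * (sval Ystar r) ^ 2 / 8 →
      hessf (Y * Yᵀ) (Y * θᵀ + θ * Yᵀ) + 2 * trInner (gradf (Y * Yᵀ)) (θ * θᵀ) ≤
        ((α - 2 * (Real.sqrt 2 - 1)) / 2) * (sval Ystar r) ^ 2 * (frob θ) ^ 2 ∧
      hessf (Y * Yᵀ) (Y * θᵀ + θ * Yᵀ) + 2 * trInner (gradf (Y * Yᵀ)) (θ * θᵀ) < 0) := by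
  -- basic facts
  have hfθ : dOrth Y Ystar ≤ frob θ := by
    refine csInf_le ⟨0, ?_⟩ ⟨Q, hQ, ?_⟩
    · rintro c ⟨O, _, rfl⟩; exact frob_nn _
    · have : Ystar * Q - Y = (-1 : ℝ) • θ := by rw [hθ]; module
      rw [this, frob_smul]; simp
  have hκ0 : 0 ≤ κ := by rw [hκ]; exact div_nonneg (sval_nn _ _) (sval_nn _ _)
  have hμσ : 0 ≤ μ * sval Ystar r / κ := div_nonneg (mul_nonneg hμ0 (sval_nn _ _)) hκ0
  have hθ1 : μ * sval Ystar r / κ ≤ frob θ := by linarith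
  have hθp : 0 < frob θ := by linarith
  have hr : 0 < r := by
    rcases Nat.eq_zero_or_pos r with h | h
    · subst h; simp [frob] at hθp
    · exact h
  have hσ : 0 < sval Ystar r := sval_pos Ystar hr hYs
  -- alignment
  set Z := Ystar * Q with hZ
  have hQ' : Q * Qᵀ = 1 := mul_eq_one_comm.1 hQ
  have hYZ : Y = Z + θ := by rw [hθ]; abel
  have hXZ : X = Z * Zᵀ := by
    rw [hX, hZ, transpose_mul, Matrix.mul_assoc, ← Matrix.mul_assoc Q, hQ', Matrix.one_mul]
  have hal := ortho_opt (Zᵀ * Y) (by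
    intro O hO
    have hQO : IsOrtho (Q * O) := by
      unfold IsOrtho at *
      rw [transpose_mul, Matrix.mul_assoc, ← Matrix.mul_assoc Qᵀ, hQ, Matrix.one_mul, hO]
    have h1 := hQmin _ hQO
    rw [← Matrix.mul_assoc, ← hZ] at h1
    have h2 : frob (Y - Z) ^ 2 ≤ frob (Y - Z * O) ^ 2 := pow_le_pow_left₀ (frob_nn _) h1 2
    have hO' : O * Oᵀ = 1 := mul_eq_one_comm.1 hO
    have e1 : trInner (Z * O) (Z * O) = trInner Z Z := by
      rw [ti_mul_left', Matrix.mul_assoc, hO', Matrix.mul_one]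
    have e2 : trInner 1 (Zᵀ * Y) = trInner Z Y := by rw [← ti_mul_left, Matrix.mul_one]
    rw [← ti_mul_left, e2]
    rw [frob_sq, frob_sq] at h2
    simp only [ti_sub_left, ti_sub_right, e1] at h2
    rw [ti_comm Y Z, ti_comm Y (Z * O)] at h2
    linarith)
  rw [hYZ] at hal
  obtain ⟨g1, g2⟩ := geom Z θ hal.1 hal.2
  set S := θ * θᵀ with hS
  set M := Y * Yᵀ - X with hM
  have hMe : Z * θᵀ + θ * Zᵀ + S = M := by
    rw [hM, hXZ, hS, hYZ, transpose_add, Matrix.add_mul, Matrix.mul_add, Matrix.mul_add]; abel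
  have hMS : Y * θᵀ + θ * Yᵀ = M + S := by
    rw [← hMe, hS, hYZ, transpose_add, Matrix.add_mul, Matrix.mul_add]; abel
  rw [hMe] at g1 g2
  have hZθ : sval Ystar r ^ 2 * frob θ ^ 2 ≤ frob (Z * θᵀ) ^ 2 := by
    have h1 := (frob_mul_bounds Ystar (Q * θᵀ)).1
    rw [← Matrix.mul_assoc, ← hZ] at h1
    have : frob (Q * θᵀ) ^ 2 = frob θ ^ 2 := by
      rw [frob_sq, ti_mul_left, ← Matrix.mul_assoc, hQ, Matrix.one_mul, ti_transpose, frob_sq]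
    rwa [this] at h1
  have hsq2 : 1 ≤ Real.sqrt 2 := by rw [Real.one_le_sqrt]; norm_num
  have g3 : 2 * (Real.sqrt 2 - 1) * (sval Ystar r ^ 2 * frob θ ^ 2) ≤ frob M ^ 2 :=
    (mul_le_mul_of_nonneg_left hZθ (by linarith)).trans g2
  -- gradient of the model problem
  have hMt : Mᵀ = M := by rw [hM, hX]; simp [transpose_sub, transpose_mul]
  have hg : trInner M M + trInner M S = trInner ((2 : ℝ) • (M * Y)) θ := by
    rw [← ti_add_right, ← hMS, ti_add_right, ti_smul_left, ti_mul_left', ← ti_transpose M (Y * θᵀ), hMt,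
      transpose_mul, transpose_transpose]
    ring
  have hg2 : 4 * (trInner M M + trInner M S) ≤ α * sval Ystar r ^ 2 * frob θ ^ 2 := by
    rw [hg]
    have h1 := ti_le ((2 : ℝ) • (M * Y)) θ
    have e : α * μ * (sval Ystar r) ^ 3 / (4 * κ) = α * sval Ystar r ^ 2 / 4 * (μ * sval Ystar r / κ) := by
      rw [show (4 * κ) = κ * 4 by ring, ← div_div]; ring
    rw [e] at hgradH
    have h2 : α * sval Ystar r ^ 2 / 4 * (μ * sval Ystar r / κ) ≤ α * sval Ystar r ^ 2 / 4 * frob θ :=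
      mul_le_mul_of_nonneg_left hθ1 (by positivity)
    have h3 := mul_le_mul_of_nonneg_right (hgradH.trans h2) hθp.le
    nlinarith
  -- Hessian term
  have hrkY : (Y * Yᵀ).rank ≤ 2 * r :=
    ((Matrix.rank_mul_le_left Y Yᵀ).trans (Matrix.rank_le_width Y)).trans (by omega)
  have hA1 := (hRSCS (Y * Yᵀ) (Y * θᵀ + θ * Yᵀ) hrkY ((rank_two _ _ _ _).trans (by omega))).2
  have hsp : frob (Y * θᵀ + θ * Yᵀ) ^ 2 ≤ 4 * (β ^ 2 * sval Ystar 1 ^ 2 * frob θ ^ 2) := by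
    have h1 := (frob_mul_bounds Y θᵀ).2
    have h2 := frob_add (Y * θᵀ) (θ * Yᵀ)
    have e : frob (θ * Yᵀ) = frob (Y * θᵀ) := by rw [← frob_transpose, transpose_mul, transpose_transpose]
    rw [e] at h2
    rw [frob_transpose] at h1
    have h3 : sval Y 1 ^ 2 ≤ (β * sval Ystar 1) ^ 2 := pow_le_pow_left₀ (sval_nn _ _) hspec 2
    have h4 := mul_le_mul_of_nonneg_right h3 (sq_nonneg (frob θ))
    have h5 := pow_le_pow_left₀ (frob_nn _) h2 2
    nlinarith
  -- gradient term
  have hSle : frob S ≤ frob θ ^ 2 := by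
    have := frob_mul θ θᵀ
    rw [frob_transpose] at this
    rw [sq]; exact this
  have hB1 := grad_diff f gradf hessf hgradf hhessf δ hδ0 X M S (by
    intro a b a' b'
    have hθe : θ = Y - Z := hθ
    have e1 : X + a • M + b • S = Y * (a • Yᵀ + b • θᵀ) + Z * ((1 - a) • Zᵀ - b • θᵀ) := by
      simp only [hM, hS, hXZ, Matrix.mul_add, Matrix.mul_sub, Matrix.mul_smul]
      have : θ * θᵀ = Y * θᵀ - Z * θᵀ := by rw [← Matrix.sub_mul, ← hθe]
      rw [this]; module
    have e2 : a' • M + b' • S = Y * (a' • Yᵀ + b' • θᵀ) + Z * ((-a') • Zᵀ - b' • θᵀ) := by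
      simp only [hM, hS, hXZ, Matrix.mul_add, Matrix.mul_sub, Matrix.mul_smul]
      have : θ * θᵀ = Y * θᵀ - Z * θᵀ := by rw [← Matrix.sub_mul, ← hθe]
      rw [this]; module
    refine hRSCS _ _ ?_ ?_
    · rw [e1]; exact rank_two _ _ _ _
    · rw [e2]; exact (rank_two _ _ _ _).trans (by omega))
  have hXM : X + M = Y * Yᵀ := by rw [hM]; abel
  rw [hXM] at hB1
  have hMle : frob M ≤ (1 + γ) * frob X := by
    have := frob_sub (Y * Yᵀ) X
    linarith
  have hMSle : frob M * frob S ≤ (1 + γ) * frob X * frob θ ^ 2 :=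
    mul_le_mul hMle hSle (frob_nn _) ((frob_nn _).trans hMle)
  -- the noise term
  have hbdd : BddAbove {c : ℝ | ∃ B : Matrix (Fin p) (Fin p) ℝ,
      B.rank ≤ r ∧ frob B ≤ 1 ∧ c = trInner B (gradf X)} := by
    refine ⟨frob (gradf X), ?_⟩
    rintro c ⟨B, _, hB, rfl⟩
    exact (ti_le _ _).trans (mul_le_of_le_one_left (frob_nn _) hB)
  have hN0 : 0 ≤ N := by
    rw [hN]
    exact le_csSup hbdd ⟨0, by simp, by simp [frob], by simp [trInner]⟩
  have hNS : trInner (gradf X) S ≤ N * frob θ ^ 2 := by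
    refine le_trans ?_ (mul_le_mul_of_nonneg_left hSle hN0)
    rcases (frob_nn S).eq_or_lt with h0 | h0
    · have := ti_le (gradf X) S
      rw [← h0] at this ⊢
      simpa using this
    · have : trInner ((frob S)⁻¹ • S) (gradf X) ≤ N := by
        rw [hN]
        refine le_csSup hbdd ⟨(frob S)⁻¹ • S, ?_, ?_, rfl⟩
        · rw [hS, ← Matrix.smul_mul]
          exact (Matrix.rank_mul_le_left _ _).trans (Matrix.rank_le_width _)
        · rw [frob_smul, abs_of_pos (inv_pos.2 h0), inv_mul_cancel₀ h0.ne']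
      rw [ti_smul_left, ti_comm, inv_mul_le_iff₀ h0] at this
      linarith
  -- combine
  have hexp : frob (Y * θᵀ + θ * Yᵀ) ^ 2 = frob M ^ 2 + 2 * trInner M S + frob S ^ 2 := by
    rw [hMS, frob_sq, frob_sq, frob_sq]
    simp only [ti_add_left, ti_add_right]
    rw [ti_comm S M]; ring
  have hMM := frob_sq M
  have main : hessf (Y * Yᵀ) (Y * θᵀ + θ * Yᵀ) + 2 * trInner (gradf (Y * Yᵀ)) S ≤
      ((α - 2 * (Real.sqrt 2 - 1)) * (sval Ystar r) ^ 2 +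
        2 * δ * (2 * β ^ 2 * (sval Ystar 1) ^ 2 + (1 + γ) * frob X) + 2 * N) *
        (frob θ) ^ 2 := by
    have d1 := mul_le_mul_of_nonneg_left hsp hδ0
    have d2 := mul_le_mul_of_nonneg_left hMSle hδ0
    linarith
  refine ⟨main, ?_⟩
  intro c1 c2 c3
  have hX0 : 0 ≤ frob X := frob_nn X
  set D := 2 * β ^ 2 * (sval Ystar 1) ^ 2 + (1 + γ) * frob X with hD
  have hD0 : 0 ≤ D := by positivity
  set C := (2 * (Real.sqrt 2 - 1) - α) * (sval Ystar r) ^ 2 with hC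
  have hCp : 0 < C := mul_pos (by linarith) (by positivity)
  have hδD : δ * D ≤ C / 8 := by
    rcases hD0.eq_or_lt with h | h
    · rw [← h]; linarith
    · rw [le_div_iff₀ (by positivity)] at c2
      linarith
  have hfin : hessf (Y * Yᵀ) (Y * θᵀ + θ * Yᵀ) + 2 * trInner (gradf (Y * Yᵀ)) S ≤
        ((α - 2 * (Real.sqrt 2 - 1)) / 2) * (sval Ystar r) ^ 2 * (frob θ) ^ 2 := by
    refine main.trans (mul_le_mul_of_nonneg_right ?_ (sq_nonneg _))
    linarith
  refine ⟨hfin, lt_of_le_of_lt hfin ?_⟩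
  have : ((α - 2 * (Real.sqrt 2 - 1)) / 2) * (sval Ystar r) ^ 2 * (frob θ) ^ 2 = - (C / 2 * frob θ ^ 2) := by
    rw [hC]; ring
  rw [this]
  have : 0 < C / 2 * frob θ ^ 2 := by positivity
  linarith
end

section
/- Let Y₁, Y₂ ∈ ℝ^{p×r}_* with d(Y₁,Y₂) ≤ σ_r(Y₂)/3. Then ‖Y₁Y₁ᵀ − Y₂Y₂ᵀ‖_F ≤ (7/3)·‖Y₂‖·d(Y₁,Y₂). -/
open Matrix

theorem aux_frob_sq {m n : ℕ} (A : Matrix (Fin m) (Fin n) ℝ) :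
    frob A ^ 2 = (Aᵀ * A).trace := by
  unfold frob
  rw [Real.sq_sqrt (by positivity)]
  simp only [Matrix.trace, Matrix.diag, Matrix.mul_apply, Matrix.transpose_apply]
  rw [Finset.sum_comm]
  simp only [pow_two]

section
attribute [local instance] Matrix.frobeniusNormedAddCommGroup

theorem aux_frob_norm {m n : ℕ} (A : Matrix (Fin m) (Fin n) ℝ) : frob A = ‖A‖ := by
  rw [Matrix.frobenius_norm_def, frob, Real.sqrt_eq_rpow]
  simp

theorem aux_frob_add {m n : ℕ} (A B : Matrix (Fin m) (Fin n) ℝ) :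
    frob (A + B) ≤ frob A + frob B := by
  simp only [aux_frob_norm]; exact norm_add_le A B

theorem aux_frob_neg {m n : ℕ} (A : Matrix (Fin m) (Fin n) ℝ) :
    frob (-A) = frob A := by
  simp only [aux_frob_norm]; exact norm_neg A

theorem aux_frob_mul {l m n : ℕ} (A : Matrix (Fin l) (Fin m) ℝ) (B : Matrix (Fin m) (Fin n) ℝ) :
    frob (A * B) ≤ frob A * frob B := by
  simp only [aux_frob_norm]; exact Matrix.frobenius_norm_mul A B

theorem aux_frob_transpose {m n : ℕ} (A : Matrix (Fin m) (Fin n) ℝ) :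
    frob Aᵀ = frob A := by
  simp only [aux_frob_norm]; exact Matrix.frobenius_norm_transpose A
end

theorem aux_frob_nonneg {m n : ℕ} (A : Matrix (Fin m) (Fin n) ℝ) : 0 ≤ frob A :=
  Real.sqrt_nonneg _

theorem aux_psd {n : ℕ} (A : Matrix (Fin n) (Fin n) ℝ) (hA : A.IsHermitian) (c : ℝ)
    (hc : ∀ i, hA.eigenvalues i ≤ c) : (c • (1 : Matrix (Fin n) (Fin n) ℝ) - A).PosSemidef := by
  have hU : (hA.eigenvectorUnitary : Matrix (Fin n) (Fin n) ℝ) *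
      (hA.eigenvectorUnitary : Matrix (Fin n) (Fin n) ℝ)ᴴ = 1 :=
    Unitary.coe_mul_star_self hA.eigenvectorUnitary
  have hs := hA.spectral_theorem
  rw [Unitary.conjStarAlgAut_apply] at hs
  have h : c • (1 : Matrix (Fin n) (Fin n) ℝ) - A =
      (hA.eigenvectorUnitary : Matrix (Fin n) (Fin n) ℝ) *
        Matrix.diagonal (fun i => c - hA.eigenvalues i) *
        (hA.eigenvectorUnitary : Matrix (Fin n) (Fin n) ℝ)ᴴ := by
    have hd : Matrix.diagonal (fun i => c - hA.eigenvalues i) =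
        c • (1 : Matrix (Fin n) (Fin n) ℝ) - Matrix.diagonal (hA.eigenvalues) := by
      ext i j
      by_cases hij : i = j
      · subst hij; simp
      · simp [hij]
    rw [hd, Matrix.mul_sub, Matrix.sub_mul, Matrix.mul_smul, Matrix.smul_mul, Matrix.mul_one, hU]
    congr 1
  rw [h]
  apply Matrix.PosSemidef.mul_mul_conjTranspose_same
  exact Matrix.PosSemidef.diagonal (fun i => sub_nonneg.2 (hc i))

theorem aux_herm {p r : ℕ} (Y : Matrix (Fin p) (Fin r) ℝ) : (Yᵀ * Y).IsHermitian := by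
  simpa using Matrix.isHermitian_conjTranspose_mul_self Y

theorem aux_eig_le {n : ℕ} (A : Matrix (Fin n) (Fin n) ℝ) (hA : A.IsHermitian) (i : Fin n) :
    hA.eigenvalues i ≤ eigVal A 1 := by
  have h : n - 1 < n := by have := i.2; omega
  rw [eigVal, dif_pos hA, dif_pos h]
  have := Tuple.monotone_sort hA.eigenvalues
    (show (Tuple.sort hA.eigenvalues).symm i ≤ ⟨n - 1, h⟩ by
      rw [Fin.le_def]; have := ((Tuple.sort hA.eigenvalues).symm i).2; simp; omega)
  simpa using this

theorem aux_sval_le {p r : ℕ} (hr : 0 < r) (Y : Matrix (Fin p) (Fin r) ℝ) :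
    sval Y r ≤ sval Y 1 := by
  unfold sval
  apply Real.sqrt_le_sqrt
  rw [eigVal, dif_pos (aux_herm Y), dif_pos (by omega)]
  exact aux_eig_le _ (aux_herm Y) _

theorem aux_eig_nonneg {p r : ℕ} (hr : 0 < r) (Y : Matrix (Fin p) (Fin r) ℝ) :
    0 ≤ eigVal (Yᵀ * Y) 1 := by
  refine le_trans ?_ (aux_eig_le _ (aux_herm Y) ⟨0, hr⟩)
  have : (Yᵀ * Y).PosSemidef := by
    simpa using Matrix.posSemidef_conjTranspose_mul_self Y
  exact this.eigenvalues_nonneg _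

theorem aux_frob_mul_sval {p r n : ℕ} (hr : 0 < r) (Y : Matrix (Fin p) (Fin r) ℝ)
    (B : Matrix (Fin r) (Fin n) ℝ) : frob (Y * B) ≤ sval Y 1 * frob B := by
  have hs : 0 ≤ sval Y 1 := Real.sqrt_nonneg _
  refine le_of_sq_le_sq ?_ (mul_nonneg hs (aux_frob_nonneg B))
  rw [mul_pow, aux_frob_sq, aux_frob_sq, sval, Real.sq_sqrt (aux_eig_nonneg hr Y)]
  have h := ((aux_psd _ (aux_herm Y) _ (aux_eig_le _ (aux_herm Y))).conjTranspose_mul_mul_same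
    B).trace_nonneg
  rw [Matrix.conjTranspose_eq_transpose_of_trivial, Matrix.mul_sub, Matrix.sub_mul,
    Matrix.trace_sub, Matrix.mul_smul, Matrix.smul_mul, Matrix.mul_one, Matrix.trace_smul,
    smul_eq_mul] at h
  rw [Matrix.transpose_mul]
  simp only [Matrix.mul_assoc] at h ⊢
  linarith

theorem aux_frob_ortho {r n : ℕ} (Q : Matrix (Fin r) (Fin r) ℝ) (hQ : IsOrtho Q)
    (B : Matrix (Fin r) (Fin n) ℝ) : frob (Q * B) = frob B := by
  have : frob (Q * B) ^ 2 = frob B ^ 2 := by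
    rw [aux_frob_sq, aux_frob_sq, Matrix.transpose_mul, Matrix.mul_assoc, ← Matrix.mul_assoc Qᵀ,
      show Qᵀ * Q = 1 from hQ, Matrix.one_mul]
  exact (pow_left_inj₀ (aux_frob_nonneg _) (aux_frob_nonneg _) two_ne_zero).1 this

theorem aux_bound {p r : ℕ} (hr : 0 < r) (Y₁ Y₂ : Matrix (Fin p) (Fin r) ℝ)
    (Q : Matrix (Fin r) (Fin r) ℝ) (hQ : IsOrtho Q) :
    frob (Y₁ * Y₁ᵀ - Y₂ * Y₂ᵀ) ≤
      2 * sval Y₂ 1 * frob (Y₂ * Q - Y₁) + frob (Y₂ * Q - Y₁) ^ 2 := by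
  obtain ⟨D, hD⟩ : ∃ D, D = Y₂ * Q - Y₁ := ⟨_, rfl⟩
  rw [← hD]
  have h1 : Y₁ = Y₂ * Q - D := by rw [hD]; abel
  have hQ' : Q * Qᵀ = 1 := mul_eq_one_comm.1 hQ
  have hY : Y₂ * Q * (Y₂ * Q)ᵀ = Y₂ * Y₂ᵀ := by
    rw [Matrix.transpose_mul, Matrix.mul_assoc, ← Matrix.mul_assoc Q, hQ', Matrix.one_mul]
  have h2 : Y₁ * Y₁ᵀ - Y₂ * Y₂ᵀ =
      -(Y₂ * (Q * Dᵀ)) + -(Y₂ * (Q * Dᵀ))ᵀ + D * Dᵀ := by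
    rw [← hY, h1, ← Matrix.mul_assoc Y₂, Matrix.transpose_mul (Y₂ * Q) Dᵀ,
      Matrix.transpose_transpose, Matrix.transpose_sub, Matrix.sub_mul, Matrix.mul_sub,
      Matrix.mul_sub]
    abel
  have h3 : frob (Y₂ * (Q * Dᵀ)) ≤ sval Y₂ 1 * frob D := by
    refine (aux_frob_mul_sval hr _ _).trans ?_
    rw [aux_frob_ortho Q hQ, aux_frob_transpose]
  have h4 := aux_frob_mul D Dᵀ
  rw [aux_frob_transpose] at h4
  rw [h2]
  refine (aux_frob_add _ _).trans ?_
  have h5 := aux_frob_add (-(Y₂ * (Q * Dᵀ))) (-(Y₂ * (Q * Dᵀ))ᵀ)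
  rw [aux_frob_neg, aux_frob_neg, aux_frob_transpose] at h5
  nlinarith

/-- local Lipschitz bound for the map from factors to PSD matrices:
if the quotient distance between `Y₁` and `Y₂` is at most `σ_r(Y₂)/3`, then
`‖Y₁Y₁ᵀ - Y₂Y₂ᵀ‖_F ≤ (7/3)‖Y₂‖ d(Y₁,Y₂)`. -/
theorem stmt19 {p r : ℕ} (Y₁ Y₂ : Matrix (Fin p) (Fin r) ℝ)
    (hY₁ : Y₁.rank = r) (hY₂ : Y₂.rank = r)
    (hd : dOrth Y₁ Y₂ ≤ sval Y₂ r / 3) :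
    frob (Y₁ * Y₁ᵀ - Y₂ * Y₂ᵀ) ≤ (7 / 3) * sval Y₂ 1 * dOrth Y₁ Y₂ := by
  rcases Nat.eq_zero_or_pos r with rfl | hr
  · have h1 : Y₁ * Y₁ᵀ - Y₂ * Y₂ᵀ = 0 := by ext i j; simp [Matrix.mul_apply]
    have h2 : 0 ≤ dOrth Y₁ Y₂ := by
      apply Real.sInf_nonneg
      rintro c ⟨Q, _, rfl⟩
      exact aux_frob_nonneg _
    have h3 : 0 ≤ sval Y₂ 1 := Real.sqrt_nonneg _
    rw [h1]
    have h4 : frob (0 : Matrix (Fin p) (Fin p) ℝ) = 0 := by simp [frob]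
    rw [h4]
    positivity
  have hs : 0 ≤ sval Y₂ 1 := Real.sqrt_nonneg _
  have hsr := aux_sval_le hr Y₂
  have hd0 : 0 ≤ dOrth Y₁ Y₂ := by
    apply Real.sInf_nonneg
    rintro c ⟨Q, _, rfl⟩
    exact aux_frob_nonneg _
  have key : ∀ x, dOrth Y₁ Y₂ < x →
      frob (Y₁ * Y₁ᵀ - Y₂ * Y₂ᵀ) ≤ 2 * sval Y₂ 1 * x + x ^ 2 := by
    intro x hx
    obtain ⟨c, ⟨Q, hQ, rfl⟩, hc⟩ := exists_lt_of_csInf_lt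
      (⟨_, 1, by simp [IsOrtho], rfl⟩ : Set.Nonempty
        {c | ∃ Q : Matrix (Fin r) (Fin r) ℝ, IsOrtho Q ∧ c = frob (Y₂ * Q - Y₁)}) hx
    refine (aux_bound hr Y₁ Y₂ Q hQ).trans ?_
    have := aux_frob_nonneg (Y₂ * Q - Y₁)
    gcongr
  have hlim : frob (Y₁ * Y₁ᵀ - Y₂ * Y₂ᵀ) ≤
      2 * sval Y₂ 1 * dOrth Y₁ Y₂ + dOrth Y₁ Y₂ ^ 2 := by
    have hcont : Continuous (fun x : ℝ => 2 * sval Y₂ 1 * x + x ^ 2) := by fun_prop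
    refine ge_of_tendsto ((hcont.tendsto (dOrth Y₁ Y₂)).mono_left
      (nhdsWithin_le_nhds (s := Set.Ioi (dOrth Y₁ Y₂)))) ?_
    filter_upwards [self_mem_nhdsWithin] with x hx
    exact key x hx
  have : dOrth Y₁ Y₂ ≤ sval Y₂ 1 / 3 := by linarith
  nlinarith
end
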